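/- Let A = (a_{ij}) be a d×n integer matrix of rank d with nonzero columns a₁,…,aₙ ∈ ℤ^d such that ℕA is pointed and ℤA = ℤ^d, and let L ∈ ℚⁿ be a weight vector. Then the ideal generated by the images of the Euler operators E₁,…,E_d, E_i = Σ_{j=1}^n a_{ij} x_j ∂_j, in the quotient ring ℂ[x₁,…,xₙ,∂₁,…,∂ₙ]/(in_L(I_A)·ℂ[x,∂]) has height d. -/

import Mathlib

/-!
The height is bounded above by `d` by Krull's height theorem: pointedness and the nonvanishing of
the columns put all of `in_L(I_A)` and all Euler operators in the maximal ideal of the origin of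
`ℂ[x,∂]`, so the ideal in question is proper and generated by `d` elements.

For the lower bound, `ℂ[x,∂]/in_L(I_A)` need not be a domain, so it is presented as the special
fibre of a Gröbner degeneration. Scale `L` to an integral weight `W`. The subalgebra of the group
algebra of `ℤⁿ × ℤ × ℤ^d` generated by the monomials of degrees `(e_j, 0, 0)` (for `x_j`),
`(0, 1, 0)` (for a parameter `t`) and `(0, W_j, a_j)` (for `∂_j`) is a finitely generated domain `T`
of transcendence degree at least `n + d + 1`, and `T/(t)` is `ℂ[x,∂]/in_L(I_A)`: the kernel of a
monomial map is spanned by binomials, which become initial forms at `t = 0`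
(`specialFibre_eq_zero_of_monoMap`), and conversely every initial form lifts to a homogenization
(`exists_homogenization`, `ker_specialFibre_le`).

If a prime `p` contains the Euler operators, its residue ring has transcendence degree at most `n`
(`trdeg_quotient_le`): where `∂_j ≠ 0`, the toric binomials make the `∂_j` algebraic over those
indexed by a maximal independent set `b` of such columns, and the Euler relations make the `x_j`,
`j ∈ b`, algebraic over these `∂_j` and the `x_k` with `k ∉ b` (`isAlgebraic_of_toric_relations`).
The dimension inequality `trdeg T ≤ ht P + trdeg (T/P)` for affine domains
(`codimBound_of_fg_domain`) then gives `n + d + 1 ≤ ht P + n` for the preimage `P` of `p` in `T`,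
and passing to the quotient by `t` lowers the height by at most one, so `d ≤ ht p`.
-/

open MvPolynomial CategoryTheory

noncomputable section

/-- The set of columns of an integer matrix. -/
def cols {d n : ℕ} (A : Matrix (Fin d) (Fin n) ℤ) : Set (Fin d → ℤ) :=
  Set.range fun j i => A i j

/-- The affine semigroup `ℕA` generated by the columns of `A` is pointed. -/
def IsPointed {d n : ℕ} (A : Matrix (Fin d) (Fin n) ℤ) : Prop :=
  ∀ v ∈ AddSubmonoid.closure (cols A),
    -v ∈ AddSubmonoid.closure (cols A) → v = 0

/-- The toric ideal `I_A ⊆ ℂ[∂₁,…,∂ₙ]`, generated by the binomials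
`∂^u - ∂^v` with `Au = Av`. -/
def toricIdeal {d n : ℕ} (A : Matrix (Fin d) (Fin n) ℤ) :
    Ideal (MvPolynomial (Fin n) ℂ) :=
  Ideal.span { f | ∃ u v : Fin n →₀ ℕ,
    A.mulVec (fun j => (u j : ℤ)) = A.mulVec (fun j => (v j : ℤ)) ∧
    f = monomial u 1 - monomial v 1 }

/-- The `L`-weight of an exponent vector. -/
def wt {n : ℕ} (L : Fin n → ℚ) (u : Fin n →₀ ℕ) : ℚ := ∑ j, L j * (u j : ℚ)

/-- The `L`-initial form of a polynomial: the sum of its terms of maximal `L`-weight. -/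
def initialForm {n : ℕ} (L : Fin n → ℚ) (f : MvPolynomial (Fin n) ℂ) :
    MvPolynomial (Fin n) ℂ :=
  ∑ u ∈ f.support.filter fun u => ∀ v ∈ f.support, wt L v ≤ wt L u,
    monomial u (f.coeff u)

/-- The `L`-initial ideal `in_L(I)` of an ideal `I ⊆ ℂ[∂₁,…,∂ₙ]`. -/
def initialIdeal {n : ℕ} (L : Fin n → ℚ) (I : Ideal (MvPolynomial (Fin n) ℂ)) :
    Ideal (MvPolynomial (Fin n) ℂ) :=
  Ideal.span { g | ∃ f ∈ I, f ≠ 0 ∧ g = initialForm L f }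

/-- The depth of a Noetherian local ring `R`, i.e. `inf { i | Ext^i_R(R/m, R) ≠ 0 }`. -/
def ringDepth (R : Type) [CommRing R] [IsLocalRing R] : ℕ∞ :=
  sInf { i : ℕ∞ | ∃ m : ℕ, i = m ∧
    Nontrivial (((Ext R (ModuleCat.{0} R) m).obj
        (Opposite.op (ModuleCat.of R (R ⧸ IsLocalRing.maximalIdeal R)))).obj
      (ModuleCat.of R R)) }

/-- A commutative ring `T` is Cohen–Macaulay if for every prime ideal `p`, the
localization `T_p` satisfies `depth = Krull dimension`. -/
def IsCohenMacaulayRing (T : Type) [CommRing T] : Prop :=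
  ∀ (p : Ideal T) [p.IsPrime],
    (ringDepth (Localization.AtPrime p) : WithBot ℕ∞) =
      ringKrullDim (Localization.AtPrime p)

/-- The Euler operator `E_i = ∑ⱼ a_{ij} xⱼ ∂ⱼ` as an element of `ℂ[x,∂]`,
where `x_j = X (Sum.inl j)` and `∂_j = X (Sum.inr j)`. -/
def eulerXD {d n : ℕ} (A : Matrix (Fin d) (Fin n) ℤ) (i : Fin d) :
    MvPolynomial (Fin n ⊕ Fin n) ℂ :=
  ∑ j, (A i j : MvPolynomial (Fin n ⊕ Fin n) ℂ) * X (Sum.inl j) * X (Sum.inr j)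

/-- The inclusion `ℂ[∂] → K[∂]`, for `K` an algebra over `ℂ[x₁,…,xₙ]`
(in practice `K = ℂ(x₁,…,xₙ)`), sending `∂ⱼ` to `∂ⱼ`. -/
def toFracPoly (n : ℕ) (K : Type) [CommRing K] [Algebra (MvPolynomial (Fin n) ℂ) K] :
    MvPolynomial (Fin n) ℂ →+* MvPolynomial (Fin n) K :=
  MvPolynomial.map ((algebraMap (MvPolynomial (Fin n) ℂ) K).comp (C : ℂ →+* _))

/-- The Euler operator `E_i = ∑ⱼ a_{ij} xⱼ ∂ⱼ` as an element of `K[∂]`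
(in practice `K = ℂ(x₁,…,xₙ)`, and the `xⱼ` act as scalars). -/
def eulerFrac {d n : ℕ} (A : Matrix (Fin d) (Fin n) ℤ) (K : Type) [CommRing K]
    [Algebra (MvPolynomial (Fin n) ℂ) K] (i : Fin d) : MvPolynomial (Fin n) K :=
  ∑ j, C (algebraMap (MvPolynomial (Fin n) ℂ) K (X j)) *
    (A i j : MvPolynomial (Fin n) K) * X j

/-- The extension `in_L(I_A)·ℂ[x,∂]` of the initial ideal of the toric ideal to
`ℂ[x,∂]`, where `x_j = X (Sum.inl j)` and `∂_j = X (Sum.inr j)`. -/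
def grIdealXD {d n : ℕ} (A : Matrix (Fin d) (Fin n) ℤ) (L : Fin n → ℚ) :
    Ideal (MvPolynomial (Fin n ⊕ Fin n) ℂ) :=
  Ideal.map (rename (Sum.inr : Fin n → Fin n ⊕ Fin n)) (initialIdeal L (toricIdeal A))

/-- The extension `in_L(I_A)·K[∂]` of the initial ideal of the toric ideal to `K[∂]`
(in practice `K = ℂ(x₁,…,xₙ)`). -/
def grIdealFrac {d n : ℕ} (A : Matrix (Fin d) (Fin n) ℤ) (L : Fin n → ℚ) (K : Type)
    [CommRing K] [Algebra (MvPolynomial (Fin n) ℂ) K] : Ideal (MvPolynomial (Fin n) K) :=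
  Ideal.map (toFracPoly n K) (initialIdeal L (toricIdeal A))

/-- The height of an ideal `J` in a commutative ring: the infimum of the heights of the
prime ideals containing `J`. -/
def idealHeight {T : Type} [CommRing T] (J : Ideal T) : ℕ∞ :=
  ⨅ (p : PrimeSpectrum T) (_ : J ≤ p.asIdeal), Order.height p

/-! ### The dimension inequality for affine domains -/

/-- The inequality `m ≤ ht P + trdeg_k (R/P)` for all primes `P` of the `k`-algebra `R`. The
transcendence degree is a cardinal, so it enters through its natural-number upper bounds `r`. -/
def CodimBound (k R : Type) [Field k] [CommRing R] [Algebra k R] (m : ℕ) : Prop :=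
  ∀ (P : Ideal R) [P.IsPrime] (r : ℕ), Algebra.trdeg k (R ⧸ P) ≤ r → (m : ℕ∞) ≤ P.height + r

theorem trdeg_quotient_comap_le {k R S : Type} [Field k] [CommRing R] [Algebra k R]
    [CommRing S] [Algebra k S] (f : R →ₐ[k] S) (P : Ideal S) :
    Algebra.trdeg k (R ⧸ P.comap f) ≤ Algebra.trdeg k (S ⧸ P) :=
  trdeg_le_of_injective (Ideal.quotientMapₐ P f le_rfl)
    (Ideal.quotientMap_injective (f := (f : R →+* S)))

theorem height_le_of_going_down {R S : Type} [CommRing R] [CommRing S]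
    [IsNoetherianRing R] [IsNoetherianRing S]
    [Algebra R S] [Algebra.HasGoingDown R S] (P : Ideal S) [P.IsPrime] (p : Ideal R) [p.IsPrime]
    (h : P.comap (algebraMap R S) = p) : p.height ≤ P.height := by
  have hlo : P.LiesOver p := ⟨h.symm⟩
  rw [Ideal.height_eq_height_add_of_liesOver_of_hasGoingDown p P]
  exact le_self_add

theorem trdeg_polynomial_quotient {k R : Type} [Field k] [CommRing R] [Algebra k R]
    (p : Ideal R) [p.IsPrime] :
    Algebra.trdeg k (Polynomial R ⧸ p.map Polynomial.C) = Algebra.trdeg k (R ⧸ p) + 1 := by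
  have e : (Polynomial R ⧸ p.map Polynomial.C) ≃ₐ[k] Polynomial (R ⧸ p) :=
    AlgEquiv.ofRingEquiv (f := (Ideal.polynomialQuotientEquivQuotientPolynomial p).symm)
      (fun x => by
        change (Ideal.polynomialQuotientEquivQuotientPolynomial p).symm
          (Ideal.Quotient.mk _ (Polynomial.C (algebraMap k R x))) = _
        rw [Ideal.polynomialQuotientEquivQuotientPolynomial_symm_mk, Polynomial.map_C]
        rfl)
  have := trdeg_add_eq k (R ⧸ p) (A := Polynomial (R ⧸ p))
  rw [Polynomial.trdeg_of_isDomain] at this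
  rw [this, e.trdeg_eq]

theorem CodimBound.of_equiv {k R S : Type} [Field k] [CommRing R] [Algebra k R]
    [CommRing S] [Algebra k S] (e : R ≃ₐ[k] S) {m : ℕ} (h : CodimBound k R m) :
    CodimBound k S m := by
  intro P _ r hr
  have h1 := (trdeg_quotient_comap_le e.toAlgHom P).trans hr
  have h2 := h (P.comap e.toAlgHom) r h1
  have h3 := RingEquiv.height_comap e.toRingEquiv P
  have h4 : P.comap e.toAlgHom = P.comap e.toRingEquiv := rfl
  rwa [h4, h3] at h2

/-- A prime `P` of `R[X]` over `p` either equals `p R[X]`, when the residue ring gains one in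
transcendence degree, or strictly contains it, when the height does. -/
theorem codimBound_polynomial {k R : Type} [Field k] [CommRing R] [IsNoetherianRing R] [Algebra k R]
    {m : ℕ} (h : CodimBound k R m) : CodimBound k (Polynomial R) (m + 1) := by
  intro P _ r hr
  let C' : R →ₐ[k] Polynomial R := Polynomial.CAlgHom
  let p := P.comap C'
  let Q : Ideal (Polynomial R) := p.map Polynomial.C
  have hQ : Q.IsPrime := Ideal.isPrime_map_C_of_isPrime
  have hQP : Q ≤ P := Ideal.map_comap_le
  have hpQ : p.height ≤ Q.height := by
    have : Q.comap (algebraMap R (Polynomial R)) = p := by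
      ext x
      simp [Q, Ideal.mem_map_C_iff, Polynomial.coeff_C]
      constructor
      · intro h; simpa using h 0
      · intro h i; split_ifs <;> simp [h]
    exact height_le_of_going_down Q p this
  by_cases hPQ : P = Q
  · have h1 : Algebra.trdeg k (R ⧸ p) + 1 ≤ r := by
      rw [← trdeg_polynomial_quotient]
      change Algebra.trdeg k (Polynomial R ⧸ Q) ≤ r
      rw [← hPQ]
      exact hr
    obtain ⟨s, hs⟩ : ∃ s : ℕ, r = s + 1 := by
      refine Nat.exists_eq_succ_of_ne_zero ?_
      rintro rfl
      have := le_trans (le_add_self) h1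
      simp at this
    subst hs
    have h2 : Algebra.trdeg k (R ⧸ p) ≤ s := by
      push_cast at h1
      exact (Cardinal.add_le_add_iff_of_lt_aleph0 Cardinal.one_lt_aleph0).mp h1
    have h3 := h p s h2
    have : Q.height ≤ P.height := Ideal.height_mono hQP
    push_cast
    rw [← add_assoc]
    gcongr
    exact h3.trans (by gcongr; exact hpQ.trans this)
  · have hlt : Q < P := lt_of_le_of_ne hQP (Ne.symm hPQ)
    have h1 := Ideal.height_add_one_le_of_lt_of_isPrime hlt
    have h3 := h p r ((trdeg_quotient_comap_le C' P).trans hr)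
    push_cast
    calc (m : ℕ∞) + 1 ≤ p.height + r + 1 := by gcongr
      _ = p.height + 1 + r := by ring
      _ ≤ P.height + r := by gcongr; exact le_trans (by gcongr) h1

theorem codimBound_mvPolynomial (k : Type) [Field k] (m : ℕ) :
    CodimBound k (MvPolynomial (Fin m) k) m := by
  induction m with
  | zero => intro P _ r hr; simp
  | succ m ih => exact (codimBound_polynomial ih).of_equiv (finSuccEquiv k m).symm

/-- By Noether normalization `T` is integral over a polynomial ring, and going-down (`T` is a domain
and polynomial rings are normal) keeps the height of a prime from dropping when pulled back to `T`. -/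
theorem codimBound_of_fg_domain {k T : Type} [Field k] [CommRing T] [IsDomain T] [Algebra k T]
    [Algebra.FiniteType k T] {m : ℕ} (hm : (m : Cardinal) ≤ Algebra.trdeg k T) :
    CodimBound k T m := by
  obtain ⟨s, g, hg, hint⟩ := exists_integral_inj_algHom_of_fg k T
  have : IsNoetherianRing T := Algebra.FiniteType.isNoetherianRing k T
  let B := MvPolynomial (Fin s) k
  algebraize [g.toRingHom]
  have : IsScalarTower k B T := IsScalarTower.of_algebraMap_eq (fun x => (g.commutes x).symm)
  have : FaithfulSMul B T := (faithfulSMul_iff_algebraMap_injective _ _).mpr hg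
  have : Algebra.IsIntegral B T := ⟨hint⟩
  have htr : Algebra.trdeg k T = s := by
    rw [← trdeg_add_eq k B, MvPolynomial.trdeg_of_isDomain, trdeg_eq_zero]
    simp
  have hms : m ≤ s := by rw [htr] at hm; exact_mod_cast hm
  intro P _ r hr
  let p := P.comap g
  have h1 : Algebra.trdeg k (B ⧸ p) ≤ r := (trdeg_quotient_comap_le g P).trans hr
  have h2 := codimBound_mvPolynomial k s p r h1
  have h3 : p.height ≤ P.height := height_le_of_going_down P p rfl
  calc (m : ℕ∞) ≤ s := by exact_mod_cast hms
    _ ≤ _ := h2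
    _ ≤ _ := by gcongr

/-! ### Points on the Euler locus -/

theorem exists_common_denominator {n : ℕ} (c : Fin n → ℚ) :
    ∃ (N : ℕ) (m : Fin n → ℤ), 0 < N ∧ ∀ k, (m k : ℚ) = N * c k := by
  have h : ∀ k, ∃ m : ℤ, (m : ℚ) = (∏ i, (c i).den : ℕ) * c k := by
    intro k
    obtain ⟨t, ht⟩ := Finset.dvd_prod_of_mem (fun i => (c i).den) (Finset.mem_univ k)
    refine ⟨t * (c k).num, ?_⟩
    rw [ht]
    push_cast
    rw [← Rat.den_mul_eq_num]
    ring
  choose m hm using h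
  exact ⟨_, m, Finset.prod_pos fun i _ => (c i).den_pos, hm⟩

/-- Let `(x, δ)` be a point over a field `K` on which the Euler operators vanish, and on which the
toric binomials in the variables with `δ_j ≠ 0` vanish. Then all its coordinates are algebraic over
at most `n` elements of `K`: those `δ_j` with `j` in a maximal set `b` of independent columns among
those with `δ_j ≠ 0`, and the `x_j` with `j ∉ b`. -/
theorem isAlgebraic_of_toric_relations {K : Type} [Field K] [CharZero K] [Algebra ℂ K] {d n : ℕ}
    (A : Matrix (Fin d) (Fin n) ℤ) (x δ : Fin n → K)
    (hE : ∀ i, ∑ j, (A i j : K) * x j * δ j = 0)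
    (hb : ∀ u v : Fin n → ℕ, (∀ j, δ j = 0 → u j = 0) → (∀ j, δ j = 0 → v j = 0) →
      A.mulVec (fun j => (u j : ℤ)) = A.mulVec (fun j => (v j : ℤ)) →
      ∏ j, δ j ^ u j = ∏ j, δ j ^ v j) :
    ∃ S : Set K, Cardinal.mk S ≤ n ∧ ∀ j, IsAlgebraic (Algebra.adjoin ℂ S) (x j) ∧
      IsAlgebraic (Algebra.adjoin ℂ S) (δ j) := by
  classical
  let aQ : Fin n → (Fin d → ℚ) := fun j i => (A i j : ℚ)
  obtain ⟨b, hbτ, -, hspan, hli⟩ := exists_linearIndepOn_extension (K := ℚ) (v := aQ)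
    (s := ∅) (t := {j | δ j ≠ 0}) (by simp) (Set.empty_subset _)
  let y : Fin n → K := fun j => if j ∈ b then δ j else x j
  let S := Set.range y
  have hS : ∀ j, IsAlgebraic (Algebra.adjoin ℂ S) (y j) := fun j =>
    isAlgebraic_algebraMap (A := K)
      (⟨y j, Algebra.subset_adjoin ⟨j, rfl⟩⟩ : Algebra.adjoin ℂ S)
  have hδb : ∀ j ∈ b, IsAlgebraic (Algebra.adjoin ℂ S) (δ j) := by
    intro j hj
    simpa [y, hj] using hS j
  have hxb : ∀ j ∉ b, IsAlgebraic (Algebra.adjoin ℂ S) (x j) := by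
    intro j hj
    simpa [y, hj] using hS j
  have hprod : ∀ u : Fin n → ℕ, (∀ k ∉ b, u k = 0) →
      IsAlgebraic (Algebra.adjoin ℂ S) (∏ k, δ k ^ u k) := by
    intro u hu
    refine Subalgebra.prod_mem (Subalgebra.algebraicClosure (Algebra.adjoin ℂ S) K) ?_
    intro k _
    by_cases hk : k ∈ b
    · exact (hδb k hk).pow _
    · rw [hu k hk, pow_zero]; exact Subalgebra.one_mem _
  have hδ : ∀ j, IsAlgebraic (Algebra.adjoin ℂ S) (δ j) := by
    intro j
    by_cases hj0 : δ j = 0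
    · rw [hj0]; exact isAlgebraic_zero
    have hmem : aQ j ∈ Submodule.span ℚ (aQ '' b) := hspan ⟨j, hj0, rfl⟩
    obtain ⟨l, hl, hlj⟩ := (Finsupp.mem_span_image_iff_linearCombination ℚ).mp hmem
    obtain ⟨N, m, hN, hm⟩ := exists_common_denominator (fun k => l k)
    have hmb : ∀ k ∉ b, m k = 0 := by
      intro k hk
      have h0 : l k = 0 := by
        by_contra h
        exact hk (hl (by simpa using h))
      have := hm k
      simp only [h0, mul_zero] at this
      exact_mod_cast this
    have hcol : ∀ i, (N : ℤ) * A i j = ∑ k, A i k * m k := by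
      intro i
      have h1 := congrFun hlj i
      rw [Finsupp.linearCombination_apply,
        Finsupp.sum_fintype l (fun k r => r • aQ k) (fun k => zero_smul ℚ (aQ k))] at h1
      simp only [Finset.sum_apply, Pi.smul_apply, smul_eq_mul, aQ] at h1
      have h2 : (N : ℚ) * (A i j : ℚ) = ∑ k, (A i k : ℚ) * (m k : ℚ) := by
        rw [← h1, Finset.mul_sum]
        refine Finset.sum_congr rfl fun k _ => ?_
        rw [hm k]; ring
      exact_mod_cast h2
    -- `δ_j^N · ∏ δ_k^{m_k⁻} = ∏ δ_k^{m_k⁺}`, the binomial relation attached to `N a_j = ∑ m_k a_k`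
    have hrel := hb (fun k => (if k = j then N else 0) + (-m k).toNat) (fun k => (m k).toNat)
      (fun k hk => by
        have h1 : k ≠ j := by rintro rfl; exact hj0 hk
        have h2 : k ∉ b := fun h => hbτ h hk
        simp [h1, hmb k h2])
      (fun k hk => by
        have h2 : k ∉ b := fun h => hbτ h hk
        simp [hmb k h2])
      (by
        ext i
        have h3 : ∀ k, (((m k).toNat : ℤ)) = m k + ((-m k).toNat : ℤ) := by intro k; omega
        have h4 : ∀ k, ((((if k = j then N else 0) + (-m k).toNat : ℕ)) : ℤ) =
            (if k = j then (N : ℤ) else 0) + ((-m k).toNat : ℤ) := by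
          intro k; split_ifs <;> simp
        change ∑ k, A i k * _ = ∑ k, A i k * _
        simp_rw [h3, h4, mul_add, Finset.sum_add_distrib]
        rw [← hcol i]
        simp [mul_comm])
    simp only [pow_add, Finset.prod_mul_distrib] at hrel
    have hj1 : ∏ k, δ k ^ (if k = j then N else 0) = δ j ^ N := by
      rw [Finset.prod_eq_single j] <;> simp +contextual
    rw [hj1] at hrel
    have hne : ∏ k, δ k ^ (-m k).toNat ≠ 0 := by
      refine Finset.prod_ne_zero_iff.mpr fun k _ => ?_
      by_cases hk : k ∈ b
      · exact pow_ne_zero _ (hbτ hk)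
      · simp [hmb k hk]
    refine IsAlgebraic.of_pow hN ?_
    rw [eq_div_of_mul_eq hne hrel, div_eq_mul_inv]
    exact (hprod _ fun k hk => by simp [hmb k hk]).mul
      (hprod _ fun k hk => by simp [hmb k hk]).inv
  refine ⟨S, ?_, fun j => ⟨?_, hδ j⟩⟩
  · simpa using Cardinal.mk_range_le (f := y)
  by_cases hj : j ∈ b
  swap
  · exact hxb j hj
  have hnot : aQ j ∉ Submodule.span ℚ (aQ '' (b \ {j})) := hli.notMem_span hj
  obtain ⟨f, hfj, hf⟩ := Submodule.exists_le_ker_of_notMem hnot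
  -- pairing the Euler relations with `f` expresses `x_j δ_j` through the `x_k δ_k`, `k ∉ b`
  have hrel : ∑ k, (f (aQ k) : K) * (x k * δ k) = 0 := by
    have h1 : ∀ k, (f (aQ k) : K) = ∑ i, (A i k : K) * ((f (Pi.single i 1) : ℚ) : K) := by
      intro k
      rw [LinearMap.pi_apply_eq_sum_univ f (aQ k)]
      push_cast [aQ, smul_eq_mul]
      refine Finset.sum_congr rfl fun i _ => ?_
      congr 3
      ext t
      simp [Pi.single_apply, eq_comm]
    simp_rw [h1, Finset.sum_mul]
    rw [Finset.sum_comm]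
    refine Finset.sum_eq_zero fun i _ => ?_
    have := congrArg (fun z => ((f (Pi.single i 1) : ℚ) : K) * z) (hE i)
    simp only [Finset.mul_sum, mul_zero] at this
    rw [← this]
    exact Finset.sum_congr rfl fun k _ => by ring
  rw [← Finset.add_sum_erase _ _ (Finset.mem_univ j)] at hrel
  have hrest : IsAlgebraic (Algebra.adjoin ℂ S)
      (∑ k ∈ Finset.univ.erase j, (f (aQ k) : K) * (x k * δ k)) := by
    refine Subalgebra.sum_mem (Subalgebra.algebraicClosure (Algebra.adjoin ℂ S) K) ?_
    intro k hk
    by_cases hkb : k ∈ b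
    · have : f (aQ k) = 0 := hf (Submodule.subset_span ⟨k, ⟨hkb, Finset.ne_of_mem_erase hk⟩, rfl⟩)
      rw [this]
      simp
    · have hq : IsAlgebraic (Algebra.adjoin ℂ S) ((f (aQ k) : ℚ) : K) := by
        have := isAlgebraic_algebraMap (R := Algebra.adjoin ℂ S) (A := K)
          (algebraMap ℂ _ ((f (aQ k) : ℚ) : ℂ))
        rwa [← IsScalarTower.algebraMap_apply, map_ratCast] at this
      exact hq.mul ((hxb k hkb).mul (hδ k))
  have hδj : δ j ≠ 0 := hbτ hj
  have hfj' : (f (aQ j) : K) ≠ 0 := by exact_mod_cast hfj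
  have hxj : x j = -(∑ k ∈ Finset.univ.erase j, (f (aQ k) : K) * (x k * δ k)) *
      ((f (aQ j) : K) * δ j)⁻¹ := by
    rw [eq_mul_inv_iff_mul_eq₀ (mul_ne_zero hfj' hδj), ← eq_neg_of_add_eq_zero_left hrel]
    ring
  have hq : IsAlgebraic (Algebra.adjoin ℂ S) ((f (aQ j) : ℚ) : K) := by
    have := isAlgebraic_algebraMap (R := Algebra.adjoin ℂ S) (A := K)
      (algebraMap ℂ _ ((f (aQ j) : ℚ) : ℂ))
    rwa [← IsScalarTower.algebraMap_apply, map_ratCast] at this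
  rw [hxj]
  exact hrest.neg.mul (hq.mul (hδ j)).inv

/-! ### Initial forms and the toric ideal -/

theorem coeff_initialForm {n : ℕ} (L : Fin n → ℚ) (f : MvPolynomial (Fin n) ℂ) (u : Fin n →₀ ℕ) :
    coeff u (initialForm L f) =
      open Classical in if ∀ v ∈ f.support, wt L v ≤ wt L u then coeff u f else 0 := by
  classical
  simp only [initialForm, coeff_sum, coeff_monomial]
  rw [Finset.sum_ite_eq']
  simp only [Finset.mem_filter, mem_support_iff]
  by_cases h : coeff u f = 0 <;> simp [h]

/-- For a binomial of `I_A` with terms of different weights, the heavier term is the initial form. -/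
theorem monomial_mem_initialIdeal {d n : ℕ} {A : Matrix (Fin d) (Fin n) ℤ} {L : Fin n → ℚ}
    {u v : Fin n →₀ ℕ}
    (h : A.mulVec (fun j => (u j : ℤ)) = A.mulVec (fun j => (v j : ℤ)))
    (hw : wt L v < wt L u) :
    monomial u 1 ∈ initialIdeal L (toricIdeal A) := by
  classical
  have huv : u ≠ v := by rintro rfl; exact lt_irrefl _ hw
  have hs : ∀ w ∈ (monomial u 1 - monomial v 1 : MvPolynomial (Fin n) ℂ).support,
      w = u ∨ w = v := by
    intro w hw'
    by_contra! hne
    simp [coeff_monomial, hne.1.symm, hne.2.symm] at hw'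
  have hu : u ∈ (monomial u 1 - monomial v 1 : MvPolynomial (Fin n) ℂ).support := by
    simp [coeff_monomial, huv.symm]
  refine Ideal.subset_span ⟨_, Ideal.subset_span ⟨u, v, h, rfl⟩, ?_, ?_⟩
  · intro h0
    rw [h0] at hu
    simp at hu
  ext w
  rw [coeff_initialForm]
  split_ifs with hmax
  · have : v ≠ w := by
      rintro rfl
      exact absurd (hmax u hu) (not_le.mpr hw)
    simp [coeff_monomial, this]
  · have : u ≠ w := by
      rintro rfl
      refine hmax fun z hz => ?_
      rcases hs z hz with rfl | rfl
      exacts [le_rfl, hw.le]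
    simp [coeff_monomial, this]

/-- A binomial of `I_A` with terms of equal weight is its own initial form. -/
theorem monomial_sub_mem_initialIdeal {d n : ℕ} {A : Matrix (Fin d) (Fin n) ℤ} {L : Fin n → ℚ}
    {u v : Fin n →₀ ℕ}
    (h : A.mulVec (fun j => (u j : ℤ)) = A.mulVec (fun j => (v j : ℤ)))
    (hw : wt L v = wt L u) :
    monomial u 1 - monomial v 1 ∈ initialIdeal L (toricIdeal A) := by
  classical
  by_cases huv : u = v
  · simp [huv]
  have hs : ∀ w ∈ (monomial u 1 - monomial v 1 : MvPolynomial (Fin n) ℂ).support,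
      w = u ∨ w = v := by
    intro w hw'
    by_contra! hne
    simp [coeff_monomial, hne.1.symm, hne.2.symm] at hw'
  refine Ideal.subset_span ⟨_, Ideal.subset_span ⟨u, v, h, rfl⟩, ?_, ?_⟩
  · intro h0
    have := congrArg (coeff u) h0
    simp [coeff_monomial, Ne.symm huv] at this
  ext w
  rw [coeff_initialForm]
  split_ifs with hmax
  · rfl
  · rw [← notMem_support_iff]
    intro hw'
    refine hmax fun z hz => ?_
    rcases hs z hz with rfl | rfl <;> rcases hs w hw' with rfl | rfl <;> simp [hw]

/-- Elements of the toric ideal of a pointed configuration have no constant term. -/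
theorem constantCoeff_eq_zero_of_mem_toricIdeal {d n : ℕ} {A : Matrix (Fin d) (Fin n) ℤ}
    (hcols : ∀ j, (fun i => A i j) ≠ 0) (hpointed : IsPointed A)
    {f : MvPolynomial (Fin n) ℂ} (hf : f ∈ toricIdeal A) : constantCoeff f = 0 := by
  have key : ∀ v : Fin n →₀ ℕ, A.mulVec (fun j => (v j : ℤ)) = 0 → v = 0 := by
    intro v hv
    by_contra hne
    obtain ⟨j, hj⟩ := Finsupp.ne_iff.mp hne
    have hj1 : 1 ≤ v j := Nat.one_le_iff_ne_zero.mpr (by simpa using hj)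
    have hcol : ∀ k, (fun i => A i k) ∈ AddSubmonoid.closure (cols A) := fun k =>
      AddSubmonoid.subset_closure ⟨k, rfl⟩
    -- `-a_j = ∑ (v - e_j)_k a_k` lies in `ℕA`, against pointedness
    refine hcols j (hpointed _ (hcol j) ?_)
    have hneg : -(fun i => A i j) = ∑ k, (v - Finsupp.single j 1 : Fin n →₀ ℕ) k • (fun i => A i k) := by
      rw [neg_eq_iff_add_eq_zero, ← hv]
      have h1 : (fun i => A i j) = ∑ k, (Finsupp.single j 1 : Fin n →₀ ℕ) k • (fun i => A i k) := by
        rw [Finset.sum_eq_single j] <;> simp +contextual [eq_comm]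
      rw [h1, ← Finset.sum_add_distrib]
      simp_rw [← add_smul, ← Finsupp.add_apply]
      rw [add_tsub_cancel_of_le (Finsupp.single_le_iff.mpr hj1)]
      ext i
      simp [Matrix.mulVec, dotProduct, mul_comm]
    rw [hneg]
    exact AddSubmonoid.sum_mem _ fun k _ => AddSubmonoid.nsmul_mem _ (hcol k) _
  have : toricIdeal A ≤ RingHom.ker (constantCoeff (R := ℂ) (σ := Fin n)) := by
    classical
    refine Ideal.span_le.mpr ?_
    rintro _ ⟨u, v, h, rfl⟩
    have huv : u = 0 ↔ v = 0 := by
      constructor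
      · rintro rfl
        refine key v ?_
        rw [← h]; ext i; simp [Matrix.mulVec, dotProduct]
      · rintro rfl
        refine key u ?_
        rw [h]; ext i; simp [Matrix.mulVec, dotProduct]
    simp only [SetLike.mem_coe, RingHom.mem_ker, map_sub, constantCoeff_monomial]
    by_cases h0 : u = 0
    · simp [h0, huv.mp h0]
    · have h1 : v ≠ 0 := fun h => h0 (huv.mpr h)
      simp [h0, h1]
  exact this hf

theorem grIdealXD_le_ker_constantCoeff {d n : ℕ} {A : Matrix (Fin d) (Fin n) ℤ}
    (hcols : ∀ j, (fun i => A i j) ≠ 0) (hpointed : IsPointed A) (L : Fin n → ℚ) :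
    grIdealXD A L ≤ RingHom.ker (constantCoeff (R := ℂ) (σ := Fin n ⊕ Fin n)) := by
  rw [grIdealXD, Ideal.map_le_iff_le_comap, initialIdeal, Ideal.span_le]
  rintro _ ⟨f, hf, -, rfl⟩
  have h0 := constantCoeff_eq_zero_of_mem_toricIdeal hcols hpointed hf
  rw [constantCoeff_eq] at h0
  simp only [Ideal.coe_comap, Set.mem_preimage, SetLike.mem_coe, RingHom.mem_ker]
  change constantCoeff (rename Sum.inr _) = 0
  rw [constantCoeff_rename, constantCoeff_eq, coeff_initialForm, h0, ite_self]

/-! ### Monomial maps -/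

/-- The algebra map `ℂ[X] → ℂ[G]` sending the monomial `X^u` to the group-algebra element `ψ u`. -/
def monoMap {τ G : Type} [AddCommGroup G] (ψ : (τ →₀ ℕ) →+ G) :
    MvPolynomial τ ℂ →ₐ[ℂ] AddMonoidAlgebra ℂ G :=
  AddMonoidAlgebra.mapDomainAlgHom ℂ ℂ ψ

theorem monoMap_monomial {τ G : Type} [AddCommGroup G] (ψ : (τ →₀ ℕ) →+ G) (u : τ →₀ ℕ) (c : ℂ) :
    monoMap ψ (monomial u c) = AddMonoidAlgebra.single (ψ u) c := by
  change AddMonoidAlgebra.mapDomain ψ (AddMonoidAlgebra.single u c) = _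
  simp

theorem monoMap_injective {τ G : Type} [AddCommGroup G] {ψ : (τ →₀ ℕ) →+ G}
    (h : Function.Injective ψ) : Function.Injective (monoMap ψ) :=
  AddMonoidAlgebra.mapDomain_injective h

/-- The kernel of a monomial map is spanned by binomials: an algebra map identifying `X^u` and
`X^v` whenever `ψ u = ψ v` kills it. -/
theorem map_eq_zero_of_monoMap_eq_zero {τ G B : Type} [AddCommGroup G] [CommRing B] [Algebra ℂ B]
    (ψ : (τ →₀ ℕ) →+ G) (π : MvPolynomial τ ℂ →ₐ[ℂ] B)
    (h : ∀ u v, ψ u = ψ v → π (monomial u 1) = π (monomial v 1))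
    {f : MvPolynomial τ ℂ} (hf : monoMap ψ f = 0) : π f = 0 := by
  -- `π` factors linearly through `monoMap ψ`, via any choice of preimages under `ψ`
  let ρ : (G →₀ ℂ) →ₗ[ℂ] B :=
    Finsupp.linearCombination ℂ fun g => π (monomial (Function.invFun ψ g) 1)
  have key : ∀ p : MvPolynomial τ ℂ, ρ (monoMap ψ p).coeff = π p := by
    intro p
    induction p using MvPolynomial.induction_on' with
    | monomial u a =>
      rw [monoMap_monomial, AddMonoidAlgebra.coeff_single, Finsupp.linearCombination_single,
        h _ u (Function.invFun_eq ⟨u, rfl⟩), ← map_smul, smul_monomial, smul_eq_mul, mul_one]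
    | add p q hp hq => rw [map_add, map_add, AddMonoidAlgebra.coeff_add, map_add, hp, hq]
  rw [← key, hf, AddMonoidAlgebra.coeff_zero, map_zero]

/-- If `B ≅ T/(t)`, then the height of a prime of `B` is at least that of its preimage in `T` minus
one. -/
theorem height_comap_le {T B : Type} [CommRing T] [CommRing B] [IsNoetherianRing T]
    (q : T →+* B) (hq : Function.Surjective q) (t : T) (ht : RingHom.ker q = Ideal.span {t})
    (p : Ideal B) [p.IsPrime] : (p.comap q).height ≤ p.height + 1 := by
  have htp : t ∈ p.comap q := by
    have : t ∈ RingHom.ker q := ht ▸ Ideal.subset_span rfl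
    rw [Ideal.mem_comap, (RingHom.mem_ker).mp this]
    exact p.zero_mem
  refine (Ideal.height_le_height_add_one_of_mem htp).trans ?_
  gcongr
  have : ((p.comap q).map (Ideal.Quotient.mk (Ideal.span {t}))) =
      p.comap ((Ideal.quotEquivOfEq ht.symm).trans
        (RingHom.quotientKerEquivOfSurjective hq) : (T ⧸ Ideal.span {t}) ≃+* B) := by
    have h1 : p.comap q = (p.comap ((Ideal.quotEquivOfEq ht.symm).trans
        (RingHom.quotientKerEquivOfSurjective hq) : (T ⧸ Ideal.span {t}) ≃+* B)).comap
          (Ideal.Quotient.mk (Ideal.span {t})) := by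
      ext x; simp [Ideal.mem_comap]
    rw [h1, Ideal.map_comap_of_surjective _ Ideal.Quotient.mk_surjective]
  rw [this, RingEquiv.height_comap]

/-- Since the columns generate `ℤ^d`, some `d` of them, indexed by `κ`, are linearly independent. -/
theorem exists_linearIndependent_cols {d n : ℕ} (A : Matrix (Fin d) (Fin n) ℤ)
    (hZA : AddSubgroup.closure (cols A) = ⊤) :
    ∃ (κ : Type) (_ : Fintype κ) (σ : κ → Fin n), Fintype.card κ = d ∧
      LinearIndependent ℤ fun k i => A i (σ k) := by
  let aQ : Fin n → (Fin d → ℚ) := fun j i => (A i j : ℚ)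
  obtain ⟨κ, σ, hσ, hspan, hli⟩ := exists_linearIndependent' ℚ aQ
  have : Finite κ := Finite.of_injective σ hσ
  have : Fintype κ := Fintype.ofFinite κ
  have htop : ∀ v : Fin d → ℤ, (fun i => (v i : ℚ)) ∈ Submodule.span ℚ (Set.range aQ) := by
    intro v
    have hv : v ∈ AddSubgroup.closure (cols A) := hZA ▸ AddSubgroup.mem_top v
    induction hv using AddSubgroup.closure_induction with
    | mem x hx =>
      obtain ⟨j, rfl⟩ := hx
      exact Submodule.subset_span ⟨j, rfl⟩
    | zero =>
      convert Submodule.zero_mem (Submodule.span ℚ (Set.range aQ)) using 1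
      ext i; simp
    | add x y _ _ hx hy =>
      convert Submodule.add_mem _ hx hy using 1
      ext i; simp
    | neg x _ hx =>
      convert Submodule.neg_mem _ hx using 1
      ext i; simp
  have htop' : ⊤ ≤ Submodule.span ℚ (Set.range (aQ ∘ σ)) := by
    rw [hspan, ← (Pi.basisFun ℚ (Fin d)).span_eq, Submodule.span_le]
    rintro _ ⟨i, rfl⟩
    have he : (fun k => ((Pi.single i 1 : Fin d → ℤ) k : ℚ)) = Pi.basisFun ℚ (Fin d) i := by
      ext k
      by_cases h : k = i
      · subst h; simp
      · simp [h]
    exact he ▸ htop (Pi.single i 1)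
  refine ⟨κ, this, σ, ?_, ?_⟩
  · have := Module.finrank_eq_card_basis (Module.Basis.mk hli htop')
    simpa using this.symm
  · rw [Fintype.linearIndependent_iff] at hli ⊢
    intro g hg k
    have := hli (fun k => (g k : ℚ)) (by
      ext i
      have := congrFun hg i
      simp only [Finset.sum_apply, Pi.smul_apply, smul_eq_mul, Pi.zero_apply, aQ,
        Function.comp_apply] at this ⊢
      exact_mod_cast this) k
    exact_mod_cast this

/-! ### The degeneration of the toric ring to the initial ideal -/

/-- The exponents in `ℤⁿ × ℤ × ℤ^d` defining the homogenized toric ring: `x_j ↦ (e_j, 0, 0)`,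
the parameter `t ↦ (0, 1, 0)` and `∂_j ↦ (0, W_j, a_j)`. -/
def homExp {d n : ℕ} (A : Matrix (Fin d) (Fin n) ℤ) (W : Fin n → ℤ) :
    Option (Fin n ⊕ Fin n) → (Fin n → ℤ) × ℤ × (Fin d → ℤ)
  | none => (0, 1, 0)
  | some (Sum.inl j) => (Pi.single j 1, 0, 0)
  | some (Sum.inr j) => (0, W j, fun i => A i j)

/-- The degree in `ℤⁿ × ℤ × ℤ^d` of a monomial of `ℂ[x,∂,t]`, additive in the exponent vector. -/
def homDeg {d n : ℕ} (A : Matrix (Fin d) (Fin n) ℤ) (W : Fin n → ℤ) :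
    (Option (Fin n ⊕ Fin n) →₀ ℕ) →+ (Fin n → ℤ) × ℤ × (Fin d → ℤ) :=
  (Finsupp.linearCombination ℕ (homExp A W)).toAddMonoidHom

theorem homDeg_apply {d n : ℕ} (A : Matrix (Fin d) (Fin n) ℤ) (W : Fin n → ℤ)
    (u : Option (Fin n ⊕ Fin n) →₀ ℕ) :
    homDeg A W u = (fun j => (u (some (Sum.inl j)) : ℤ),
      (u none : ℤ) + ∑ j, W j * (u (some (Sum.inr j)) : ℤ),
      A.mulVec fun j => (u (some (Sum.inr j)) : ℤ)) := by
  change Finsupp.linearCombination ℕ (homExp A W) u = _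
  rw [Finsupp.linearCombination_apply,
    Finsupp.sum_fintype u (fun k r => r • homExp A W k) (fun k => zero_smul ℕ (homExp A W k)),
    Fintype.sum_option, Fintype.sum_sum_type]
  ext i
  · simp [homExp, Prod.fst_sum, Finset.sum_apply, Pi.single_apply]
  · simp [homExp, Prod.fst_sum, Prod.snd_sum, mul_comm]
  · simp [homExp, Prod.snd_sum, Finset.sum_apply, Matrix.mulVec, dotProduct, mul_comm]

/-- Specialization of `ℂ[x,∂,t]` at `t = 0`. -/
def setT0 (n : ℕ) :
    MvPolynomial (Option (Fin n ⊕ Fin n)) ℂ →ₐ[ℂ] MvPolynomial (Fin n ⊕ Fin n) ℂ :=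
  aeval fun o => o.elim 0 X

theorem setT0_rename {n : ℕ} (f : MvPolynomial (Fin n ⊕ Fin n) ℂ) :
    setT0 n (rename some f) = f := by
  rw [setT0, aeval_rename]
  simp [Function.comp_def]

theorem setT0_monomial {n : ℕ} (u : Option (Fin n ⊕ Fin n) →₀ ℕ) :
    setT0 n (monomial u 1) = 0 ^ u none * ((∏ j, X (Sum.inl j) ^ u (some (Sum.inl j))) *
      rename Sum.inr (monomial (Finsupp.equivFunOnFinite.symm fun j => u (some (Sum.inr j))) 1)) := by
  rw [setT0, aeval_monomial, Finsupp.prod_fintype _ _ (fun _ => pow_zero _), Fintype.prod_option,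
    Fintype.prod_sum_type, monomial_eq, Finsupp.prod_fintype _ _ (fun _ => pow_zero _)]
  simp

theorem wt_cast {n : ℕ} {L : Fin n → ℚ} {N : ℕ} {W : Fin n → ℤ} (hW : ∀ k, (W k : ℚ) = N * L k)
    (u : Fin n →₀ ℕ) : ((∑ j, W j * (u j : ℤ) : ℤ) : ℚ) = N * wt L u := by
  push_cast
  rw [wt, Finset.mul_sum]
  exact Finset.sum_congr rfl fun k _ => by rw [hW k]; ring

theorem wt_le_iff {n : ℕ} {L : Fin n → ℚ} {N : ℕ} {W : Fin n → ℤ} (hN : 0 < N)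
    (hW : ∀ k, (W k : ℚ) = N * L k) (u v : Fin n →₀ ℕ) :
    wt L u ≤ wt L v ↔ ∑ j, W j * (u j : ℤ) ≤ ∑ j, W j * (v j : ℤ) := by
  rw [← Int.cast_le (R := ℚ), wt_cast hW, wt_cast hW, mul_le_mul_iff_right₀ (by exact_mod_cast hN)]

/-- The map `ℂ[x,∂,t] → ℂ[x,∂]/in_L(I_A)` obtained by setting `t = 0`. -/
def specialFibre {d n : ℕ} (A : Matrix (Fin d) (Fin n) ℤ) (L : Fin n → ℚ) :
    MvPolynomial (Option (Fin n ⊕ Fin n)) ℂ →ₐ[ℂ] (MvPolynomial (Fin n ⊕ Fin n) ℂ ⧸ grIdealXD A L) :=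
  (Ideal.Quotient.mkₐ ℂ _).comp (setT0 n)

theorem specialFibre_surjective {d n : ℕ} (A : Matrix (Fin d) (Fin n) ℤ) (L : Fin n → ℚ) :
    Function.Surjective (specialFibre A L) := by
  refine (Ideal.Quotient.mk_surjective (I := grIdealXD A L)).comp fun f => ⟨rename some f, ?_⟩
  exact setT0_rename f

theorem mk_rename_mem {d n : ℕ} {A : Matrix (Fin d) (Fin n) ℤ} {L : Fin n → ℚ}
    {f : MvPolynomial (Fin n) ℂ} (hf : f ∈ initialIdeal L (toricIdeal A)) :
    Ideal.Quotient.mk (grIdealXD A L) (rename Sum.inr f) = 0 :=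
  Ideal.Quotient.eq_zero_iff_mem.mpr (Ideal.mem_map_of_mem _ hf)

/-- The special fibre map factors through the homogenized toric ring. A binomial relation of the
latter multiplies the lighter of two monomials by `t`; at `t = 0` it becomes an initial form of a
binomial of `I_A`, or `0`. -/
theorem specialFibre_eq_zero_of_monoMap {d n : ℕ} {A : Matrix (Fin d) (Fin n) ℤ} {L : Fin n → ℚ}
    {N : ℕ} {W : Fin n → ℤ} (hN : 0 < N) (hW : ∀ k, (W k : ℚ) = N * L k)
    {f : MvPolynomial (Option (Fin n ⊕ Fin n)) ℂ} (hf : monoMap (homDeg A W) f = 0) :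
    specialFibre A L f = 0 := by
  refine map_eq_zero_of_monoMap_eq_zero (homDeg A W) (specialFibre A L) ?_ hf
  clear hf f
  -- if only `v` involves `t`, the `∂`-part of `u` is heavier and so lies in the initial ideal
  have aux : ∀ u v, homDeg A W u = homDeg A W v → u none = 0 → 0 < v none →
      specialFibre A L (monomial u 1) = specialFibre A L (monomial v 1) := by
    intro u v h hu hv
    simp only [homDeg_apply, Prod.mk.injEq] at h
    obtain ⟨-, h2, h3⟩ := h
    have hlt : wt L (Finsupp.equivFunOnFinite.symm fun j => v (some (Sum.inr j))) <
        wt L (Finsupp.equivFunOnFinite.symm fun j => u (some (Sum.inr j))) := by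
      rw [← not_le, wt_le_iff hN hW]
      simp only [Finsupp.equivFunOnFinite_symm_apply_apply]
      omega
    have := mk_rename_mem (A := A) (monomial_mem_initialIdeal (A := A) (by simpa using h3) hlt)
    change Ideal.Quotient.mk _ (setT0 n _) = Ideal.Quotient.mk _ (setT0 n _)
    rw [setT0_monomial, setT0_monomial, map_mul, map_mul, this, zero_pow hv.ne']
    simp
  intro u v h
  rcases Nat.eq_zero_or_pos (u none) with hu | hu <;>
    rcases Nat.eq_zero_or_pos (v none) with hv | hv
  · simp only [homDeg_apply, Prod.mk.injEq] at h
    obtain ⟨h1, h2, h3⟩ := h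
    have heq : wt L (Finsupp.equivFunOnFinite.symm fun j => v (some (Sum.inr j))) =
        wt L (Finsupp.equivFunOnFinite.symm fun j => u (some (Sum.inr j))) := by
      apply le_antisymm <;> rw [wt_le_iff hN hW] <;>
        simp only [Finsupp.equivFunOnFinite_symm_apply_apply] <;> omega
    have := mk_rename_mem (A := A) (monomial_sub_mem_initialIdeal (A := A) (by simpa using h3) heq)
    rw [map_sub, map_sub, sub_eq_zero] at this
    have h1' : ∀ j, u (some (Sum.inl j)) = v (some (Sum.inl j)) := fun j => by
      exact_mod_cast congrFun h1 j
    change Ideal.Quotient.mk _ (setT0 n _) = Ideal.Quotient.mk _ (setT0 n _)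
    rw [setT0_monomial, setT0_monomial, hu, hv, map_mul, map_mul, map_mul, map_mul, this]
    simp only [h1']
  · exact aux u v h hu hv
  · exact (aux v u h.symm hv hu).symm
  · change Ideal.Quotient.mk _ (setT0 n _) = Ideal.Quotient.mk _ (setT0 n _)
    rw [setT0_monomial, setT0_monomial, zero_pow hu.ne', zero_pow hv.ne', zero_mul, zero_mul]

/-- `I_A` is contained in the kernel of `∂_j ↦ a_j`. -/
theorem monoMap_eq_zero_of_mem_toricIdeal {d n : ℕ} {A : Matrix (Fin d) (Fin n) ℤ}
    {ψ : (Fin n →₀ ℕ) →+ (Fin d → ℤ)} (hψ : ∀ u, ψ u = A.mulVec fun j => (u j : ℤ))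
    {f : MvPolynomial (Fin n) ℂ} (hf : f ∈ toricIdeal A) : monoMap ψ f = 0 := by
  have : toricIdeal A ≤ RingHom.ker (monoMap ψ) := by
    refine Ideal.span_le.mpr ?_
    rintro _ ⟨u, v, h, rfl⟩
    rw [SetLike.mem_coe, RingHom.mem_ker, map_sub, monoMap_monomial, monoMap_monomial, hψ, hψ, h,
      sub_self]
  exact this hf

/-- The homogenization of `f ∈ I_A` with respect to the weight `W` is a relation of the homogenized
toric ring and reduces to the initial form of `f` modulo `t`. -/
theorem exists_homogenization {d n : ℕ} {A : Matrix (Fin d) (Fin n) ℤ} {L : Fin n → ℚ}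
    {N : ℕ} {W : Fin n → ℤ} (hN : 0 < N) (hW : ∀ k, (W k : ℚ) = N * L k)
    {f : MvPolynomial (Fin n) ℂ} (hf : f ∈ toricIdeal A) (hf0 : f ≠ 0) :
    ∃ F : MvPolynomial (Option (Fin n ⊕ Fin n)) ℂ, monoMap (homDeg A W) F = 0 ∧
      F - rename some (rename Sum.inr (initialForm L f)) ∈ Ideal.span {X none} := by
  classical
  let w : (Fin n →₀ ℕ) → ℤ := fun u => ∑ j, W j * (u j : ℤ)
  obtain ⟨u₀, hu₀, hmax⟩ := f.support.exists_max_image w (support_nonempty.mpr hf0)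
  let k : (Fin n →₀ ℕ) → ℕ := fun u => (w u₀ - w u).toNat
  -- each term `c ∂^u` is multiplied by the power of `t` bringing its weight up to the maximum
  let F : MvPolynomial (Option (Fin n ⊕ Fin n)) ℂ := ∑ u ∈ f.support,
    rename some (rename Sum.inr (monomial u (coeff u f))) * X none ^ k u
  refine ⟨F, ?_, ?_⟩
  · let ψ : (Fin n →₀ ℕ) →+ (Fin d → ℤ) :=
      (Finsupp.linearCombination ℕ fun j i => A i j).toAddMonoidHom
    have hψ : ∀ u, ψ u = A.mulVec fun j => (u j : ℤ) := by
      intro u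
      change Finsupp.linearCombination ℕ (fun j i => A i j) u = _
      rw [Finsupp.linearCombination_apply,
        Finsupp.sum_fintype u (fun k r => r • fun i => A i k) (fun k => zero_smul ℕ _)]
      ext i
      simp [Matrix.mulVec, dotProduct, mul_comm]
    have h0 := monoMap_eq_zero_of_mem_toricIdeal hψ hf
    -- `F` has constant second degree, so its image is that of `f`, relabelled by `g ↦ (0, max, g)`
    have hF : monoMap (homDeg A W) F = AddMonoidAlgebra.mapDomainLinearMap ℂ ℂ
        (fun g => ((0 : Fin n → ℤ), w u₀, g)) (monoMap ψ f) := by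
      conv_rhs => rw [f.as_sum, map_sum, map_sum]
      rw [map_sum]
      refine Finset.sum_congr rfl fun u hu => ?_
      rw [monoMap_monomial, AddMonoidAlgebra.mapDomainLinearMap_single, rename_monomial, rename_monomial,
        X_pow_eq_monomial, monomial_mul, mul_one, monoMap_monomial, hψ, homDeg_apply]
      have e1 : ∀ j, Finsupp.mapDomain some (Finsupp.mapDomain Sum.inr u)
          (some (Sum.inr j : Fin n ⊕ Fin n)) = u j := fun j => by
        rw [Finsupp.mapDomain_apply (Option.some_injective _),
          Finsupp.mapDomain_apply Sum.inr_injective]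
      have e2 : ∀ j, Finsupp.mapDomain some (Finsupp.mapDomain Sum.inr u)
          (some (Sum.inl j : Fin n ⊕ Fin n)) = 0 := fun j => by
        rw [Finsupp.mapDomain_apply (Option.some_injective _)]
        exact Finsupp.mapDomain_of_notMem_range _ _ (by simp)
      have e3 : Finsupp.mapDomain some (Finsupp.mapDomain (Sum.inr : Fin n → Fin n ⊕ Fin n) u)
          none = 0 := Finsupp.mapDomain_of_notMem_range _ _ (by simp)
      simp only [Finsupp.add_apply, e1, e2, e3, Finsupp.single_apply, reduceCtorEq, if_false,
        if_true, add_zero, zero_add, Nat.cast_zero]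
      congr 1
      refine Prod.ext rfl (Prod.ext ?_ rfl)
      have := hmax u hu
      simp only [k, w] at this ⊢
      omega
    rw [hF, h0, map_zero]
  · rw [← Ideal.Quotient.eq_zero_iff_mem, map_sub, sub_eq_zero]
    simp only [F, initialForm, map_sum, map_mul, map_pow]
    rw [Finset.sum_filter]
    refine Finset.sum_congr rfl fun u hu => ?_
    split_ifs with h
    · have : k u = 0 := by
        have := (wt_le_iff hN hW u₀ u).mp (h u₀ hu₀)
        simp only [k, w]; omega
      rw [this, pow_zero, mul_one]
    · have : k u ≠ 0 := by
        contrapose! h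
        intro v hv
        rw [wt_le_iff hN hW]
        have := hmax v hv
        simp only [k, w] at h this
        omega
      rw [Ideal.Quotient.eq_zero_iff_mem.mpr (Ideal.mem_span_singleton_self _), zero_pow this,
        mul_zero]

/-- The kernel of the special fibre map is generated by the homogenized toric relations and `t`. -/
theorem ker_specialFibre_le {d n : ℕ} {A : Matrix (Fin d) (Fin n) ℤ} {L : Fin n → ℚ}
    {N : ℕ} {W : Fin n → ℤ} (hN : 0 < N) (hW : ∀ k, (W k : ℚ) = N * L k) :
    RingHom.ker (specialFibre A L) ≤
      RingHom.ker (monoMap (homDeg A W)) ⊔ Ideal.span {X none} := by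
  set K := RingHom.ker (monoMap (homDeg A W)) ⊔ Ideal.span {X none}
  intro f hf
  have h1 : f - rename some (setT0 n f) ∈ Ideal.span {X none} := by
    rw [← Ideal.Quotient.eq_zero_iff_mem, map_sub, sub_eq_zero]
    have : (Ideal.Quotient.mkₐ ℂ (Ideal.span {X none})) =
        ((Ideal.Quotient.mkₐ ℂ (Ideal.span {X none})).comp (rename some)).comp (setT0 n) := by
      ext o
      rcases o with _ | o
      · simp [setT0]
      · simp [setT0]
    exact DFunLike.congr_fun this f
  have h2 : grIdealXD A L ≤ K.comap (rename some) := by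
    rw [grIdealXD, Ideal.map_le_iff_le_comap, initialIdeal, Ideal.span_le]
    rintro _ ⟨g, hg, hg0, rfl⟩
    obtain ⟨F, hF, hF'⟩ := exists_homogenization hN hW hg hg0
    have := K.sub_mem ((le_sup_left : _ ≤ K) ((RingHom.mem_ker).mpr hF))
      ((le_sup_right : _ ≤ K) hF')
    simpa using this
  have h3 : setT0 n f ∈ grIdealXD A L := Ideal.Quotient.eq_zero_iff_mem.mp hf
  have := K.add_mem ((le_sup_right : _ ≤ K) h1) (h2 h3)
  simpa using this

/-! ### Transcendence degrees -/

/-- The classes of `t`, of the `x_j`, and of the `∂_j` for `d` independent columns `a_j` are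
algebraically independent, as their degrees in `ℤⁿ × ℤ × ℤ^d` are linearly independent. -/
theorem le_trdeg_quotient_ker_monoMap {d n : ℕ} (A : Matrix (Fin d) (Fin n) ℤ)
    (hZA : AddSubgroup.closure (cols A) = ⊤) (W : Fin n → ℤ) :
    ((n + d + 1 : ℕ) : Cardinal) ≤ Algebra.trdeg ℂ
      (MvPolynomial (Option (Fin n ⊕ Fin n)) ℂ ⧸ RingHom.ker (monoMap (homDeg A W))) := by
  obtain ⟨κ, _, σ, hκ, hli⟩ := exists_linearIndependent_cols A hZA
  let ι : Option (Fin n ⊕ κ) → Option (Fin n ⊕ Fin n) := Option.map (Sum.map id σ)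
  have hind : LinearIndependent ℤ (homExp A W ∘ ι) := by
    rw [Fintype.linearIndependent_iff] at hli ⊢
    intro c hc
    rw [Fintype.sum_option, Fintype.sum_sum_type] at hc
    have h3 : ∀ k, c (some (Sum.inr k)) = 0 := hli (fun k => c (some (Sum.inr k))) (by
      simpa [ι, homExp, Prod.snd_sum] using congrArg (fun z => z.2.2) hc)
    have h1 : ∀ j, c (some (Sum.inl j)) = 0 := fun j => by
      simpa [ι, homExp, Prod.fst_sum, Finset.sum_apply, Pi.single_apply] using
        congrFun (congrArg (fun z => z.1) hc) j
    have h2 : c none = 0 := by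
      simpa [ι, homExp, Prod.snd_sum, Prod.fst_sum, h3] using congrArg (fun z => z.2.1) hc
    rintro (_ | j | k)
    exacts [h2, h1 j, h3 k]
  have hindN : LinearIndependent ℕ (homExp A W ∘ ι) :=
    hind.restrict_scalars (by
      intro a b hab
      simpa using hab)
  let ψ := (homDeg A W).comp (Finsupp.mapDomain.addMonoidHom ι)
  have hψ : Function.Injective ψ := by
    intro u v h
    refine hindN ?_
    rw [← Finsupp.linearCombination_mapDomain, ← Finsupp.linearCombination_mapDomain]
    exact h
  let F : MvPolynomial (Option (Fin n ⊕ κ)) ℂ →ₐ[ℂ]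
      (MvPolynomial (Option (Fin n ⊕ Fin n)) ℂ ⧸ RingHom.ker (monoMap (homDeg A W))) :=
    (Ideal.Quotient.mkₐ ℂ _).comp (rename ι)
  have hcomp : ∀ f, monoMap (homDeg A W) (rename ι f) = monoMap ψ f := by
    intro f
    induction f using MvPolynomial.induction_on' with
    | monomial u a => rw [rename_monomial, monoMap_monomial, monoMap_monomial]; rfl
    | add p q hp hq => rw [map_add, map_add, map_add, hp, hq]
  have hF : Function.Injective F := by
    rw [injective_iff_map_eq_zero]
    intro f hf
    have h1 : monoMap (homDeg A W) (rename ι f) = 0 := Ideal.Quotient.eq_zero_iff_mem.mp hf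
    rw [hcomp] at h1
    exact (injective_iff_map_eq_zero _).mp (monoMap_injective hψ) f h1
  refine le_trans (le_of_eq ?_) (trdeg_le_of_injective F hF)
  rw [MvPolynomial.trdeg_of_isDomain]
  simp [hκ]

theorem trdeg_le_of_toric {d n : ℕ} {A : Matrix (Fin d) (Fin n) ℤ} {L : Fin n → ℚ}
    {D : Type} [CommRing D] [IsDomain D] [Algebra ℂ D]
    (Φ : MvPolynomial (Fin n ⊕ Fin n) ℂ →ₐ[ℂ] D) (hΦ : Function.Surjective Φ)
    (hΦJ : ∀ f ∈ grIdealXD A L, Φ f = 0) (hΦE : ∀ i, Φ (eulerXD A i) = 0) :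
    Algebra.trdeg ℂ D ≤ n := by
  let K := FractionRing D
  have : CharZero K := charZero_of_injective_algebraMap (algebraMap ℂ K).injective
  let F : MvPolynomial (Fin n ⊕ Fin n) ℂ →ₐ[ℂ] K := (IsScalarTower.toAlgHom ℂ D K).comp Φ
  have hF : ∀ f, F f = algebraMap D K (Φ f) := fun f => rfl
  have hFI : ∀ f ∈ initialIdeal L (toricIdeal A), F (rename Sum.inr f) = 0 := by
    intro f hf
    rw [hF, hΦJ _ (Ideal.mem_map_of_mem _ hf), map_zero]
  let x : Fin n → K := fun j => F (X (Sum.inl j))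
  let δ : Fin n → K := fun j => F (X (Sum.inr j))
  have hmon : ∀ u : Fin n → ℕ,
      F (rename Sum.inr (monomial (Finsupp.equivFunOnFinite.symm u) 1)) = ∏ j, δ j ^ u j := by
    intro u
    rw [monomial_eq, Finsupp.prod_fintype _ _ (fun _ => pow_zero _)]
    simp [δ]
  have hE : ∀ i, ∑ j, (A i j : K) * x j * δ j = 0 := by
    intro i
    have : F (eulerXD A i) = 0 := by rw [hF, hΦE, map_zero]
    simpa [eulerXD, map_sum, map_mul] using this
  have hne : ∀ u : Fin n → ℕ, (∀ j, δ j = 0 → u j = 0) → ∏ j, δ j ^ u j ≠ 0 := by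
    intro u hu
    refine Finset.prod_ne_zero_iff.mpr fun j _ => ?_
    by_cases h : δ j = 0
    · simp [hu j h]
    · exact pow_ne_zero _ h
  obtain ⟨S, hS, halg⟩ := isAlgebraic_of_toric_relations A x δ hE (by
    intro u v hu hv h
    -- the weights agree, for otherwise the heavier monomial lies in the initial ideal
    rcases lt_trichotomy (wt L (Finsupp.equivFunOnFinite.symm u))
      (wt L (Finsupp.equivFunOnFinite.symm v)) with hlt | heq | hgt
    · refine absurd ?_ (hne v hv)
      rw [← hmon]
      exact hFI _ (monomial_mem_initialIdeal (A := A) (by simpa using h.symm) hlt)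
    · have := hFI _ (monomial_sub_mem_initialIdeal (A := A) (by simpa using h.symm) heq)
      rw [map_sub, map_sub, hmon, hmon, sub_eq_zero] at this
      exact this.symm
    · refine absurd ?_ (hne u hu)
      rw [← hmon]
      exact hFI _ (monomial_mem_initialIdeal (A := A) (by simpa using h) hgt))
  have hFalg : ∀ f, IsAlgebraic (Algebra.adjoin ℂ S) (F f) := by
    intro f
    induction f using MvPolynomial.induction_on with
    | C a =>
      have : F (C a) = algebraMap (Algebra.adjoin ℂ S) K (algebraMap ℂ _ a) := by
        rw [← IsScalarTower.algebraMap_apply]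
        exact F.commutes a
      rw [this]
      exact isAlgebraic_algebraMap _
    | add f g hf hg => rw [map_add]; exact hf.add hg
    | mul_X f o hf =>
      rw [map_mul]
      refine hf.mul ?_
      rcases o with j | j
      exacts [(halg j).1, (halg j).2]
  have hKalg : Algebra.IsAlgebraic (Algebra.adjoin ℂ S) K := by
    refine ⟨fun z => ?_⟩
    obtain ⟨a, b, -, rfl⟩ := IsFractionRing.div_surjective (A := D) z
    obtain ⟨a, rfl⟩ := hΦ a
    obtain ⟨b, rfl⟩ := hΦ b
    rw [div_eq_mul_inv]
    exact (hFalg a).mul (hFalg b).inv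
  calc Algebra.trdeg ℂ D ≤ Algebra.trdeg ℂ K :=
        trdeg_le_of_injective (IsScalarTower.toAlgHom ℂ D K) (IsFractionRing.injective D K)
    _ ≤ Cardinal.mk S := Algebra.IsAlgebraic.trdeg_le_cardinalMk ℂ S
    _ ≤ n := hS

/-- The Euler operators cut out a locus of dimension at most `n` in the special fibre. -/
theorem trdeg_quotient_le {d n : ℕ} (A : Matrix (Fin d) (Fin n) ℤ) (L : Fin n → ℚ)
    (p : Ideal (MvPolynomial (Fin n ⊕ Fin n) ℂ ⧸ grIdealXD A L)) [p.IsPrime]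
    (hp : ∀ i, Ideal.Quotient.mk (grIdealXD A L) (eulerXD A i) ∈ p) :
    Algebra.trdeg ℂ ((MvPolynomial (Fin n ⊕ Fin n) ℂ ⧸ grIdealXD A L) ⧸ p) ≤ n := by
  refine trdeg_le_of_toric (A := A) (L := L)
    ((Ideal.Quotient.mkₐ ℂ p).comp (Ideal.Quotient.mkₐ ℂ (grIdealXD A L)))
    (Ideal.Quotient.mk_surjective.comp Ideal.Quotient.mk_surjective) (fun f hf => ?_)
    (fun i => Ideal.Quotient.eq_zero_iff_mem.mpr (hp i))
  refine Ideal.Quotient.eq_zero_iff_mem.mpr ?_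
  change Ideal.Quotient.mk _ f ∈ p
  rw [Ideal.Quotient.eq_zero_iff_mem.mpr hf]
  exact p.zero_mem

/-! ### The two height bounds -/

/-- The lower bound, for every prime containing the Euler operators. -/
theorem le_height {d n : ℕ} (A : Matrix (Fin d) (Fin n) ℤ)
    (hZA : AddSubgroup.closure (cols A) = ⊤) (L : Fin n → ℚ)
    (p : Ideal (MvPolynomial (Fin n ⊕ Fin n) ℂ ⧸ grIdealXD A L)) [p.IsPrime]
    (hp : ∀ i, Ideal.Quotient.mk (grIdealXD A L) (eulerXD A i) ∈ p) : (d : ℕ∞) ≤ p.height := by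
  obtain ⟨N, W, hN, hW⟩ := exists_common_denominator L
  have hdom : IsDomain (AddMonoidAlgebra ℂ ((Fin n → ℤ) × ℤ × (Fin d → ℤ))) := inferInstance
  set I := RingHom.ker (monoMap (homDeg A W)) with hI
  have : I.IsPrime := RingHom.ker_isPrime _
  let T := MvPolynomial (Option (Fin n ⊕ Fin n)) ℂ ⧸ I
  have hIle : ∀ f ∈ I, specialFibre A L f = 0 := fun f hf =>
    specialFibre_eq_zero_of_monoMap hN hW ((RingHom.mem_ker).mp hf)
  let q : T →ₐ[ℂ] (MvPolynomial (Fin n ⊕ Fin n) ℂ ⧸ grIdealXD A L) :=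
    Ideal.Quotient.liftₐ I (specialFibre A L) hIle
  have hq : Function.Surjective q :=
    Ideal.Quotient.lift_surjective_of_surjective _ _ (specialFibre_surjective A L)
  have hker : RingHom.ker q.toRingHom = Ideal.span {Ideal.Quotient.mk I (X none)} := by
    apply le_antisymm
    · intro z hz
      obtain ⟨f, rfl⟩ := Ideal.Quotient.mk_surjective z
      have h1 : f ∈ RingHom.ker (specialFibre A L) := hz
      have h2 := Ideal.mem_map_of_mem (Ideal.Quotient.mk I) (ker_specialFibre_le hN hW h1)
      rwa [Ideal.map_sup, ← hI, Ideal.map_quotient_self, bot_sup_eq, Ideal.map_span,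
        Set.image_singleton] at h2
    · rw [Ideal.span_le, Set.singleton_subset_iff]
      change Ideal.Quotient.mk (grIdealXD A L) (setT0 n (X none)) = 0
      simp [setT0]
  -- `n + d + 1 ≤ ht P + n` for the preimage `P` of `p` in the homogenized toric ring
  have h1 := codimBound_of_fg_domain (le_trdeg_quotient_ker_monoMap A hZA W)
    (p.comap q.toRingHom) n
    ((trdeg_quotient_comap_le q p).trans (trdeg_quotient_le A L p hp))
  have h2 := height_comap_le q.toRingHom hq _ hker p
  have h3 : ((n + d + 1 : ℕ) : ℕ∞) ≤ p.height + 1 + n := h1.trans (by gcongr)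
  generalize p.height = m at h3 ⊢
  cases m with
  | top => exact le_top
  | coe m => norm_cast at h3 ⊢; omega

/-- Krull's height theorem in terms of `idealHeight`; the ideal `J` witnesses properness. -/
theorem idealHeight_span_le {T : Type} [CommRing T] [IsNoetherianRing T] {s : Set T}
    (hs : s.Finite) {J : Ideal T} (hJ : J ≠ ⊤) (h : Ideal.span s ≤ J) :
    idealHeight (Ideal.span s) ≤ s.ncard := by
  have : Ideal.span s ≠ ⊤ := fun h0 => hJ (top_le_iff.mp (h0 ▸ h))
  obtain ⟨p, hp⟩ := Ideal.nonempty_minimalPrimes this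
  have := hp.1.1
  refine (iInf₂_le (⟨p, this⟩ : PrimeSpectrum T) hp.1.2).trans ?_
  rw [← PrimeSpectrum.height_eq_orderHeight]
  exact Ideal.height_le_card_of_mem_minimalPrimes_span hs hp

/-- The ideal generated by the images of the Euler operators in
`ℂ[x,∂]/in_L(I_A)ℂ[x,∂]` has height `d`. -/
theorem stmt6 {d n : ℕ} (A : Matrix (Fin d) (Fin n) ℤ)
    (hrank : A.rank = d)
    (hcols : ∀ j, (fun i => A i j) ≠ 0)
    (hpointed : IsPointed A)
    (hZA : AddSubgroup.closure (cols A) = ⊤)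
    (L : Fin n → ℚ) :
    idealHeight (Ideal.span (Set.range fun i =>
      Ideal.Quotient.mk (grIdealXD A L) (eulerXD A i))) = (d : ℕ∞) := by
  apply le_antisymm
  -- evaluation at the origin exhibits a proper ideal containing the Euler operators
  · let ε : (MvPolynomial (Fin n ⊕ Fin n) ℂ ⧸ grIdealXD A L) →+* ℂ :=
      Ideal.Quotient.lift _ constantCoeff (grIdealXD_le_ker_constantCoeff hcols hpointed L)
    refine (idealHeight_span_le (J := RingHom.ker ε) (Set.finite_range _)
      (RingHom.ker_ne_top ε) ?_).trans ?_
    · rw [Ideal.span_le]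
      rintro _ ⟨i, rfl⟩
      change constantCoeff (eulerXD A i) = 0
      simp [eulerXD]
    · have := Set.ncard_image_le (f := fun i => Ideal.Quotient.mk (grIdealXD A L) (eulerXD A i))
        (Set.finite_univ (α := Fin d))
      rw [Set.image_univ, Set.ncard_univ, Nat.card_eq_fintype_card, Fintype.card_fin] at this
      exact_mod_cast this
  · refine le_iInf₂ fun p hp => ?_
    rw [← PrimeSpectrum.height_eq_orderHeight]
    exact le_height A hZA L p.asIdeal fun i => hp (Ideal.subset_span ⟨i, rfl⟩)

end
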